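/- Let A = (a_{ij}) ∈ ℝ^{N×N} be a nonzero skew-symmetric matrix, a := max |a_{ij}|, t > 0, and k ≥ 1. Let Y_A(ξ_1), …, Y_A(ξ_k) be k independent copies of the random skew-symmetric matrix Y_A built from i.i.d. standard Gaussians, and let log Φ̃(t,A) := E log det(√t I_N + Y_A). Then for every r > 0, Pr( | (1/k) Σ_{i=1}^k log det(√t I_N + Y_A(ξ_i)) − log Φ̃(t,A) | ≥ N r ) ≤ 2 exp(−t k N r² / (2a²)). -/

import Mathlib

/-!
The function `f ξ = log det (√t I + Y_A(ξ))` is smooth on Gaussian space, and its Euclidean gradient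
satisfies `|∇f|² ≤ K := a² N / (2t)`; the bound is Gaussian concentration for such a function.

*Gradient bound.* The derivative of `f` at `ξ` in direction `h` is `tr (G H)`, where
`G = (√t I + Y_A(ξ))⁻¹` and `H = Y_A(h)`. Skew-symmetry of `Y_A(ξ)` gives `G + Gᵀ = 2√t G Gᵀ`, so
with `c = 1 / (2√t)` the matrix `G - c I` is `c` times an orthogonal matrix (`resolvent_sphere`).
Since `tr H = 0`, one may replace `G` by `G - c I`, and Cauchy-Schwarz yields
`(tr (G H))² ≤ c² N ‖H‖² ≤ (N / (4t)) · 2a² |h|²` in the Frobenius norm (`sq_fderiv_log_det_le`).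

*Gaussian concentration.* For independent standard Gaussian vectors `X`, `Y`, put
`ψ(θ) = E exp (f(X) - f(cos θ X + sin θ Y))`. Rotation invariance of the law of `(X, Y)` and Gaussian
integration by parts give `ψ'(θ) ≤ K sin θ ψ(θ)`, whence `E exp (f(X) - f(Y)) = ψ(π/2) ≤ exp K`
(`stdG_exp_sub_le`). Applying this to `λ f` and Jensen's inequality in `Y` shows that `f - E f` is
sub-Gaussian with variance proxy `2K` (`stdG_hasSubgaussianMGF`). The factor `2` is not optimal, but
it is exactly what the claimed exponent leaves room for.

*Averaging.* The Hoeffding bound for `k` independent copies with deviation `N r` has exponent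
`-k (N r)² / (2 · 2K) = -t k N r² / (2a²)`, and the two tails give the factor `2`.
-/

open MeasureTheory ProbabilityTheory Matrix

/-- Total weighted `k`-matching of the weighted graph encoded by the
skew-symmetric matrix `A`. -/
noncomputable def phiW {N : ℕ} (A : Matrix (Fin N) (Fin N) ℝ) (k : ℕ) : ℝ :=
  ∑ M ∈ Finset.univ.filter
      (fun M : Finset (Fin N × Fin N) =>
        ((∀ p ∈ M, p.1 < p.2) ∧
          ∀ p ∈ M, ∀ q ∈ M, p ≠ q →
            p.1 ≠ q.1 ∧ p.1 ≠ q.2 ∧ p.2 ≠ q.1 ∧ p.2 ≠ q.2) ∧ M.card = k),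
    ∏ p ∈ M, (A p.1 p.2) ^ 2

/-- The weighted matching polynomial `Φ(t, A)`. -/
noncomputable def PhiW {N : ℕ} (A : Matrix (Fin N) (Fin N) ℝ) (t : ℝ) : ℝ :=
  ∑ k ∈ Finset.range (N / 2 + 1), phiW A k * t ^ (N / 2 - k)

/-- `Φ(t,A)`, multiplied by `√t` when `N` is odd. -/
noncomputable def PhiFull {N : ℕ} (A : Matrix (Fin N) (Fin N) ℝ) (t : ℝ) : ℝ :=
  (if Even N then 1 else Real.sqrt t) * PhiW A t

/-- Index type of the strictly upper-triangular positions. -/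
abbrev PairIdx (N : ℕ) := {p : Fin N × Fin N // p.1 < p.2}

/-- The canonical product of standard Gaussian measures, one for each edge slot. -/
noncomputable def gaussPi (N : ℕ) : Measure (PairIdx N → ℝ) :=
  Measure.pi fun _ => gaussianReal 0 1

/-- The sample `Y_A(ξ)` of the random skew-symmetric matrix `Y_A`. -/
noncomputable def sampleY {N : ℕ} (A : Matrix (Fin N) (Fin N) ℝ)
    (ξ : PairIdx N → ℝ) : Matrix (Fin N) (Fin N) ℝ :=
  Matrix.of fun i j =>
    if h : i < j then A i j * ξ ⟨(i, j), h⟩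
    else if h : j < i then A i j * ξ ⟨(j, i), h⟩
    else 0

/-- `log Φ̃(t, A) = E log det(√t I_N + Y_A)` for i.i.d. standard Gaussian entries. -/
noncomputable def logPhiTilde {N : ℕ} (t : ℝ) (A : Matrix (Fin N) (Fin N) ℝ) : ℝ :=
  ∫ ξ, Real.log ((Real.sqrt t • (1 : Matrix (Fin N) (Fin N) ℝ) + sampleY A ξ).det) ∂(gaussPi N)

/-- The constant `C₁ = -(1/√(2π)) ∫ log(x²) e^{-x²/2} dx`. -/
noncomputable def C1 : ℝ :=
  -(Real.sqrt (2 * Real.pi))⁻¹ * ∫ x : ℝ, Real.log (x ^ 2) * Real.exp (-x ^ 2 / 2)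

/-! ### Concentration for the standard Gaussian measure -/

section GaussianPart

variable {ι : Type*} [Fintype ι]

/-- The standard Gaussian measure on `ι → ℝ`, as a product of one-dimensional ones. -/
noncomputable def stdG (ι : Type*) [Fintype ι] : Measure (ι → ℝ) :=
  Measure.pi fun _ => gaussianReal 0 1

instance : IsProbabilityMeasure (stdG ι) := by unfold stdG; infer_instance

/-- The density of `stdG ι` with respect to Lebesgue measure. -/
noncomputable def stdGDensity (x : ι → ℝ) : ℝ := ∏ i, gaussianPDFReal 0 1 (x i)

lemma stdGDensity_nonneg (x : ι → ℝ) : 0 ≤ stdGDensity x :=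
  Finset.prod_nonneg fun _ _ => gaussianPDFReal_nonneg _ _ _

lemma stdG_eq_withDensity :
    stdG ι = (volume : Measure (ι → ℝ)).withDensity fun x => ENNReal.ofReal (stdGDensity x) := by
  unfold stdG
  refine (Measure.pi_eq (μ := fun _ : ι => gaussianReal 0 1) fun s hs => ?_)
  have hsi : ∀ i, Integrable ((s i).indicator (gaussianPDFReal 0 1)) volume :=
    fun i => (integrable_gaussianPDFReal 0 1).indicator (hs i)
  have hprod : (Set.univ.pi s).indicator (stdGDensity (ι := ι))
      = fun x => ∏ i, (s i).indicator (gaussianPDFReal 0 1) (x i) := by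
    ext x
    by_cases hx : x ∈ Set.univ.pi s
    · rw [Set.indicator_of_mem hx]
      exact Finset.prod_congr rfl fun i _ => (Set.indicator_of_mem (hx i trivial) _).symm
    · rw [Set.indicator_of_notMem hx]
      simp only [Set.mem_univ_pi, not_forall] at hx
      obtain ⟨i, hi⟩ := hx
      exact (Finset.prod_eq_zero (Finset.mem_univ i) (Set.indicator_of_notMem hi _)).symm
  have hms : MeasurableSet (Set.univ.pi s) := MeasurableSet.univ_pi hs
  have hI : Integrable ((Set.univ.pi s).indicator (stdGDensity (ι := ι))) volume := by
    rw [hprod]; exact Integrable.fintype_prod hsi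
  rw [withDensity_apply _ hms,
    ← ofReal_integral_eq_lintegral_ofReal ((integrable_indicator_iff hms).1 hI)
      (ae_of_all _ stdGDensity_nonneg), ← integral_indicator hms, hprod,
    integral_fintype_prod_volume_eq_prod, ENNReal.ofReal_prod_of_nonneg]
  · refine Finset.prod_congr rfl fun i _ => ?_
    rw [integral_indicator (hs i), gaussianReal_apply_eq_integral _ one_ne_zero]
  · exact fun i _ => integral_nonneg fun x =>
      Set.indicator_nonneg (fun x _ => gaussianPDFReal_nonneg _ _ _) x

lemma continuous_stdGDensity : Continuous (stdGDensity (ι := ι)) := by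
  unfold stdGDensity gaussianPDFReal; fun_prop

lemma integral_stdG (g : (ι → ℝ) → ℝ) : ∫ x, g x ∂stdG ι = ∫ x, stdGDensity x * g x := by
  rw [stdG_eq_withDensity, integral_withDensity_eq_integral_toReal_smul
    continuous_stdGDensity.measurable.ennreal_ofReal (ae_of_all _ fun _ => ENNReal.ofReal_lt_top)]
  simp [ENNReal.toReal_ofReal (stdGDensity_nonneg _)]

lemma integrable_stdG_iff (g : (ι → ℝ) → ℝ) :
    Integrable g (stdG ι) ↔ Integrable (fun x => stdGDensity x * g x) := by
  rw [stdG_eq_withDensity, integrable_withDensity_iff_integrable_smul'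
    continuous_stdGDensity.measurable.ennreal_ofReal (ae_of_all _ fun _ => ENNReal.ofReal_lt_top)]
  simp [ENNReal.toReal_ofReal (stdGDensity_nonneg _)]

lemma hasLineDerivAt_stdGDensity (x h : ι → ℝ) :
    HasLineDerivAt ℝ stdGDensity (-(∑ i, h i * x i) * stdGDensity x) x h := by
  have hexp : ∀ y : ι → ℝ, stdGDensity y
      = (∏ _i : ι, (√(2 * Real.pi * (1 : NNReal)))⁻¹) * Real.exp (∑ i, -(y i) ^ 2 / 2) := by
    intro y
    simp [stdGDensity, gaussianPDFReal, Finset.prod_mul_distrib, Real.exp_sum]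
  unfold HasLineDerivAt
  simp_rw [hexp]
  have h1 : HasDerivAt (fun t : ℝ => ∑ i, -((x + t • h) i) ^ 2 / 2) (∑ i, -(h i * x i)) 0 := by
    refine HasDerivAt.fun_sum fun i _ => ?_
    have : HasDerivAt (fun t : ℝ => (x + t • h) i) (h i) 0 := by
      simpa using ((hasDerivAt_id (0 : ℝ)).mul_const (h i)).const_add (x i)
    convert! ((this.pow 2).neg.div_const 2) using 1
    simp; ring
  convert! (h1.exp.const_mul (∏ _i : ι, (√(2 * Real.pi * (1 : NNReal)))⁻¹)) using 1
  simp [Finset.sum_neg_distrib]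
  ring

/-- Gaussian integration by parts in the direction `h`. -/
lemma stdG_integral_by_parts {φ : (ι → ℝ) → ℝ} {φ' : (ι → ℝ) → ℝ} {h : ι → ℝ}
    (hφ : ∀ x, HasLineDerivAt ℝ φ (φ' x) x h) (hi : Integrable φ (stdG ι))
    (hi' : Integrable φ' (stdG ι))
    (hix : Integrable (fun x => (∑ i, h i * x i) * φ x) (stdG ι)) :
    ∫ x, (∑ i, h i * x i) * φ x ∂stdG ι = ∫ x, φ' x ∂stdG ι := by
  rw [integrable_stdG_iff] at hi hi' hix
  rw [integral_stdG, integral_stdG]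
  have := integral_bilinear_hasLineDerivAt_right_eq_neg_left_of_integrable
    (μ := (volume : Measure (ι → ℝ))) (f := φ) (f' := φ') (g := stdGDensity)
    (g' := fun x => -(∑ i, h i * x i) * stdGDensity x) (v := h)
    (B := ContinuousLinearMap.mul ℝ ℝ)
    (by simpa [mul_comm] using hi')
    (by
      refine hix.neg.congr (ae_of_all _ fun x => ?_)
      simp; ring)
    (by simpa [mul_comm] using hi) (fun x _ => hφ x) (fun x _ => hasLineDerivAt_stdGDensity x h)
  have e1 : ∀ x : ι → ℝ, stdGDensity x * ((∑ i, h i * x i) * φ x)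
      = -((ContinuousLinearMap.mul ℝ ℝ) (φ x)) (-(∑ i, h i * x i) * stdGDensity x) := by
    intro x; simp; ring
  simp_rw [e1]
  rw [integral_neg, this, neg_neg]
  simp [mul_comm]

instance : IsGaussian (stdG ι) := by
  classical
  have h := map_pi_eq_stdGaussian (ι := ι)
  have h2 : stdG ι = (stdGaussian (EuclideanSpace ℝ ι)).map
      (EuclideanSpace.equiv ι ℝ : EuclideanSpace ℝ ι →L[ℝ] (ι → ℝ)) := by
    rw [← h, Measure.map_map (by fun_prop) (by fun_prop)]
    symm
    exact Measure.map_id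
  rw [h2]; infer_instance

lemma integral_id_stdG : ∫ x, id x ∂stdG ι = 0 := by
  have hI : Integrable (id : (ι → ℝ) → ι → ℝ) (stdG ι) := IsGaussian.integrable_id
  ext i
  rw [eval_integral (fun i => hI.eval i)]
  simp only [id, Pi.zero_apply]
  have h := (measurePreserving_eval (fun _ : ι => gaussianReal 0 1) i).map_eq
  have h3 : ∫ y, y ∂gaussianReal 0 1 = ∫ x : ι → ℝ, x i ∂stdG ι := by
    rw [← h, integral_map (measurable_pi_apply i).aemeasurable (by fun_prop)]; rfl
  rw [← h3]; simp

lemma integrable_exp_norm_stdG (c : ℝ) : Integrable (fun x => Real.exp (c * ‖x‖)) (stdG ι) := by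
  obtain ⟨C, hC, hI⟩ := IsGaussian.exists_integrable_exp_sq (stdG ι)
  refine (hI.const_mul (Real.exp (c ^ 2 / (4 * C)))).mono' (by fun_prop) (ae_of_all _ fun x => ?_)
  rw [Real.norm_eq_abs, Real.abs_exp, ← Real.exp_add]
  apply Real.exp_le_exp.2
  have : c ^ 2 / (4 * C) + C * ‖x‖ ^ 2 - c * ‖x‖ = (c - 2 * C * ‖x‖) ^ 2 / (4 * C) := by
    field_simp; ring
  have h2 : 0 ≤ (c - 2 * C * ‖x‖) ^ 2 / (4 * C) := by positivity
  linarith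

lemma map_rotation_stdG (θ : ℝ) :
    ((stdG ι).prod (stdG ι)).map (ContinuousLinearMap.rotation θ) = (stdG ι).prod (stdG ι) :=
  IsGaussian.map_rotation_eq_self integral_id_stdG θ

lemma clm_apply_eq_sum [DecidableEq ι] (L : (ι → ℝ) →L[ℝ] ℝ) (v : ι → ℝ) :
    L v = ∑ i, L (Pi.single i 1) * v i := by
  have h := congrArg L (pi_eq_sum_univ' v)
  rw [h, map_sum]
  refine Finset.sum_congr rfl fun i _ => ?_
  rw [map_smul, smul_eq_mul, mul_comm]

/-- A Euclidean gradient bound turned into a bound in the sup norm of `ι → ℝ`; it is only used for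
integrability, so the dimensional factor is harmless. -/
lemma abs_fderiv_le {f : (ι → ℝ) → ℝ} {K : ℝ}
    (hK : ∀ x h, (fderiv ℝ f x h) ^ 2 ≤ K * ∑ i, h i ^ 2) (hK0 : 0 ≤ K) (x h : ι → ℝ) :
    |fderiv ℝ f x h| ≤ √(K * Fintype.card ι) * ‖h‖ := by
  refine abs_le_of_sq_le_sq ?_ (by positivity)
  rw [mul_pow, Real.sq_sqrt (by positivity)]
  refine (hK x h).trans ?_
  rw [mul_assoc]
  gcongr
  refine (Finset.sum_le_card_nsmul _ _ (‖h‖ ^ 2) fun i _ => ?_).trans (by simp)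
  rw [← sq_abs]
  gcongr
  exact norm_le_pi_norm h i

lemma abs_sub_le_of_fderiv {f : (ι → ℝ) → ℝ} (hf : Differentiable ℝ f) {C : ℝ} (hC0 : 0 ≤ C)
    (hC : ∀ x h, |fderiv ℝ f x h| ≤ C * ‖h‖) (x y : ι → ℝ) : f x - f y ≤ C * ‖x - y‖ := by
  refine (le_abs_self _).trans ?_
  exact Convex.norm_image_sub_le_of_norm_fderiv_le (𝕜 := ℝ) (s := Set.univ)
    (fun z _ => hf z) (fun z _ => ContinuousLinearMap.opNorm_le_bound _ hC0 (hC z))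
    convex_univ trivial trivial

/-- `⟨∇f(u), ∇f(w)⟩ ≤ K` when `|∇f|² ≤ K`, the gradient at `u` being given by its coordinates. -/
lemma fderiv_mul_le {f : (ι → ℝ) → ℝ} {K : ℝ}
    [DecidableEq ι]
    (hK : ∀ x h, (fderiv ℝ f x h) ^ 2 ≤ K * ∑ i, h i ^ 2) (hK0 : 0 ≤ K) (u w : ι → ℝ) :
    fderiv ℝ f w (fun i => fderiv ℝ f u (Pi.single i 1)) ≤ K := by
  set h : ι → ℝ := fun i => fderiv ℝ f u (Pi.single i 1) with hh
  have h1 : fderiv ℝ f u h = ∑ i, h i ^ 2 := by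
    rw [clm_apply_eq_sum (fderiv ℝ f u) h]
    exact Finset.sum_congr rfl fun i _ => (sq (h i)).symm
  have h2 := hK u h
  rw [h1] at h2
  have hS : 0 ≤ ∑ i, h i ^ 2 := Finset.sum_nonneg fun i _ => sq_nonneg _
  have h3 : ∑ i, h i ^ 2 ≤ K := by
    by_contra hc
    push Not at hc
    nlinarith
  have h4 := hK w h
  exact abs_le_of_sq_le_sq' (by nlinarith : _ ≤ K ^ 2) hK0 |>.2

lemma norm_rot_le (θ : ℝ) (x y : ι → ℝ) :
    ‖Real.cos θ • x + Real.sin θ • y‖ ≤ ‖x‖ + ‖y‖ ∧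
    ‖-Real.sin θ • x + Real.cos θ • y‖ ≤ ‖x‖ + ‖y‖ := by
  constructor <;>
  · refine (norm_add_le _ _).trans ?_
    rw [norm_smul, norm_smul]
    simp only [norm_neg, Real.norm_eq_abs]
    nlinarith [norm_nonneg x, norm_nonneg y, Real.abs_cos_le_one θ, Real.abs_sin_le_one θ]

/-- If `|∇f|² ≤ K` and `X`, `Y` are independent standard Gaussian vectors, then
`E exp (f(X) - f(Y)) ≤ exp K`. The pair `(X, cos θ X + sin θ Y)` interpolates between `(X, X)` and
`(X, Y)`. -/
theorem stdG_exp_sub_le {f : (ι → ℝ) → ℝ} (hf : ContDiff ℝ 1 f) {K : ℝ} (hK0 : 0 ≤ K)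
    (hK : ∀ x h, (fderiv ℝ f x h) ^ 2 ≤ K * ∑ i, h i ^ 2) :
    ∫ p, Real.exp (f p.1 - f p.2) ∂((stdG ι).prod (stdG ι)) ≤ Real.exp K := by
  classical
  set μ := (stdG ι).prod (stdG ι) with hμ
  set C := √(K * Fintype.card ι) with hCdef
  have hC0 : 0 ≤ C := Real.sqrt_nonneg _
  have hC : ∀ x h, |fderiv ℝ f x h| ≤ C * ‖h‖ := abs_fderiv_le hK hK0
  have hfd : Differentiable ℝ f := hf.differentiable (by norm_num)
  have hfc : Continuous f := hf.continuous
  have hf'c : Continuous (fderiv ℝ f) := hf.continuous_fderiv (by norm_num)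
  have hlip := abs_sub_le_of_fderiv hfd hC0 hC
  -- `w θ p` and its `θ`-derivative form the rotation of `p` by `θ`; `F` is the integrand of `ψ`,
  -- dominated together with its derivative by `bound` uniformly in `θ`
  set w : ℝ → (ι → ℝ) × (ι → ℝ) → ι → ℝ := fun θ p => Real.cos θ • p.1 + Real.sin θ • p.2 with hw
  set w' : ℝ → (ι → ℝ) × (ι → ℝ) → ι → ℝ := fun θ p => -Real.sin θ • p.1 + Real.cos θ • p.2
    with hw'
  set F : ℝ → (ι → ℝ) × (ι → ℝ) → ℝ := fun θ p => Real.exp (f p.1 - f (w θ p)) with hF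
  set F' : ℝ → (ι → ℝ) × (ι → ℝ) → ℝ :=
    fun θ p => Real.exp (f p.1 - f (w θ p)) * -(fderiv ℝ f (w θ p) (w' θ p)) with hF'
  set bound : (ι → ℝ) × (ι → ℝ) → ℝ :=
    fun p => Real.exp (3 * C * ‖p.1‖) * Real.exp (3 * C * ‖p.2‖) with hbound
  have hbi : Integrable bound μ :=
    (integrable_exp_norm_stdG (3 * C)).mul_prod (integrable_exp_norm_stdG (3 * C))
  have hexpo : ∀ θ p, f p.1 - f (w θ p) ≤ 2 * C * (‖p.1‖ + ‖p.2‖) := by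
    intro θ p
    refine (hlip _ _).trans ?_
    have h1 : ‖p.1 - w θ p‖ ≤ ‖p.1‖ + (‖p.1‖ + ‖p.2‖) :=
      (norm_sub_le _ _).trans (by gcongr; exact (norm_rot_le θ p.1 p.2).1)
    calc C * ‖p.1 - w θ p‖ ≤ C * (‖p.1‖ + (‖p.1‖ + ‖p.2‖)) := by gcongr
      _ ≤ _ := by nlinarith [mul_nonneg hC0 (norm_nonneg p.2)]
  have hFb : ∀ θ p, ‖F θ p‖ ≤ bound p := by
    intro θ p
    rw [hF, hbound]
    simp only [Real.norm_eq_abs, Real.abs_exp]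
    rw [← Real.exp_add]
    refine Real.exp_le_exp.2 ((hexpo θ p).trans ?_)
    nlinarith [mul_nonneg hC0 (norm_nonneg p.2), mul_nonneg hC0 (norm_nonneg p.1)]
  have hF'b : ∀ θ p, ‖F' θ p‖ ≤ bound p := by
    intro θ p
    rw [hF', hbound]
    simp only [Real.norm_eq_abs, abs_mul, Real.abs_exp, abs_neg]
    have h1 : |fderiv ℝ f (w θ p) (w' θ p)| ≤ Real.exp (C * (‖p.1‖ + ‖p.2‖)) := by
      refine (hC _ _).trans (le_trans ?_ (Real.add_one_le_exp _))
      have : C * ‖w' θ p‖ ≤ C * (‖p.1‖ + ‖p.2‖) := by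
        gcongr; exact (norm_rot_le θ p.1 p.2).2
      linarith
    calc _ ≤ Real.exp (2 * C * (‖p.1‖ + ‖p.2‖)) * Real.exp (C * (‖p.1‖ + ‖p.2‖)) := by
            gcongr; exact hexpo θ p
      _ = _ := by rw [← Real.exp_add, ← Real.exp_add]; ring_nf
  have hwc : ∀ θ, Continuous (w θ) := fun θ => by rw [hw]; fun_prop
  have hwc' : ∀ θ, Continuous (w' θ) := fun θ => by rw [hw']; fun_prop
  have hFc : ∀ θ, Continuous (F θ) := fun θ => by
    have := hwc θ
    rw [hF]; fun_prop
  have hF'c : ∀ θ, Continuous (F' θ) := fun θ => by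
    have h1 := hwc θ
    have h2 := hwc' θ
    rw [hF']
    exact (by fun_prop : Continuous fun p : (ι → ℝ) × (ι → ℝ) => Real.exp (f p.1 - f (w θ p))).mul
      ((hf'c.comp h1).clm_apply h2).neg
  have hFi : ∀ θ, Integrable (F θ) μ := fun θ =>
    hbi.mono' (hFc θ).aestronglyMeasurable (ae_of_all _ (hFb θ))
  have hderiv : ∀ θ p, HasDerivAt (F · p) (F' θ p) θ := by
    intro θ p
    have h1 : HasDerivAt (fun θ => w θ p) (w' θ p) θ :=
      ((Real.hasDerivAt_cos θ).smul_const p.1).add ((Real.hasDerivAt_sin θ).smul_const p.2)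
    have h2 : HasDerivAt (fun θ => f (w θ p)) (fderiv ℝ f (w θ p) (w' θ p)) θ :=
      (hfd (w θ p)).hasFDerivAt.comp_hasDerivAt θ h1
    exact (h2.const_sub (f p.1)).exp
  set ψ : ℝ → ℝ := fun θ => ∫ p, F θ p ∂μ with hψ
  have hψd : ∀ θ, HasDerivAt ψ (∫ p, F' θ p ∂μ) θ := fun θ =>
    (hasDerivAt_integral_of_dominated_loc_of_deriv_le (s := Set.univ) Filter.univ_mem
      (Filter.Eventually.of_forall fun θ => (hFc θ).aestronglyMeasurable) (hFi θ)
      (hF'c θ).aestronglyMeasurable (ae_of_all _ fun p θ _ => hF'b θ p) hbi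
      (ae_of_all _ fun p θ _ => hderiv θ p)).2
  -- after rotating, `(w θ p, its derivative)` becomes a pair `q` of independent Gaussians, and
  -- `p.1` becomes `z q`
  have hineq : ∀ θ, 0 ≤ Real.sin θ → ∫ p, F' θ p ∂μ ≤ K * Real.sin θ * ψ θ := by
    intro θ hs
    set c := Real.cos θ with hc
    set s := Real.sin θ with hs'
    have hcs : c ^ 2 + s ^ 2 = 1 := Real.cos_sq_add_sin_sq θ
    set z : (ι → ℝ) × (ι → ℝ) → ι → ℝ := fun q => c • q.1 - s • q.2 with hz
    set G0 : (ι → ℝ) × (ι → ℝ) → ℝ := fun q => Real.exp (f (z q) - f q.1) with hG0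
    set G : (ι → ℝ) × (ι → ℝ) → ℝ := fun q => G0 q * -(fderiv ℝ f q.1 q.2) with hG
    have hzrot : ∀ p, z (ContinuousLinearMap.rotation θ p) = p.1 := by
      intro p
      ext i
      simp only [hz, ContinuousLinearMap.rotation_apply, Pi.sub_apply, Pi.smul_apply, Pi.add_apply,
        smul_eq_mul, ← hc, ← hs']
      linear_combination (p.1 i) * hcs
    have hGrot : ∀ p, G (ContinuousLinearMap.rotation θ p) = F' θ p := by
      intro p
      simp only [hG, hG0, hzrot, hF']
      rfl
    have hG0rot : ∀ p, G0 (ContinuousLinearMap.rotation θ p) = F θ p := by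
      intro p
      simp only [hG0, hzrot, hF]
      rfl
    have hG0c : Continuous G0 := by rw [hG0]; fun_prop
    have hGc : Continuous G :=
      hG0c.mul ((hf'c.comp continuous_fst).clm_apply continuous_snd).neg
    have hrot := map_rotation_stdG (ι := ι) θ
    have hrm : AEMeasurable (ContinuousLinearMap.rotation θ :
        (ι → ℝ) × (ι → ℝ) →L[ℝ] (ι → ℝ) × (ι → ℝ)) μ := by fun_prop
    have hG0i : Integrable G0 μ := by
      rw [hμ, ← hrot, integrable_map_measure hG0c.aestronglyMeasurable hrm]
      exact (hFi θ).congr (ae_of_all _ fun p => (hG0rot p).symm)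
    have hGi : Integrable G μ := by
      rw [hμ, ← hrot, integrable_map_measure hGc.aestronglyMeasurable hrm]
      exact (hbi.mono' (hF'c θ).aestronglyMeasurable (ae_of_all _ (hF'b θ))).congr
        (ae_of_all _ fun p => (hGrot p).symm)
    have hG0int : ∫ q, G0 q ∂μ = ψ θ := by
      conv_lhs => rw [hμ, ← hrot]
      rw [integral_map hrm hG0c.aestronglyMeasurable]
      exact integral_congr_ae (ae_of_all _ hG0rot)
    have hGint : ∫ q, G q ∂μ = ∫ p, F' θ p ∂μ := by
      conv_lhs => rw [hμ, ← hrot]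
      rw [integral_map hrm hGc.aestronglyMeasurable]
      exact integral_congr_ae (ae_of_all _ hGrot)
    rw [← hGint, ← hG0int, hμ, integral_prod _ hGi, integral_prod _ hG0i, ← integral_const_mul]
    refine integral_mono_ae hGi.integral_prod_left (hG0i.integral_prod_left.const_mul _) ?_
    filter_upwards [hG0i.prod_right_ae, hGi.prod_right_ae] with u hu0 hu
    -- integration by parts in the second variable, in the direction `h = ∇f(u)`
    set h : ι → ℝ := fun i => fderiv ℝ f u (Pi.single i 1) with hh
    have hdir : ∀ v, fderiv ℝ f u v = ∑ i, h i * v i :=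
      fun v => clm_apply_eq_sum (fderiv ℝ f u) v
    have hline : ∀ v, HasLineDerivAt ℝ (fun v => G0 (u, v))
        (G0 (u, v) * fderiv ℝ f (z (u, v)) (-s • h)) v h := by
      intro v
      have h1 : HasDerivAt (fun τ : ℝ => z (u, v + τ • h)) (-s • h) 0 := by
        have : HasDerivAt (fun τ : ℝ => v + τ • h) h 0 := by
          simpa using ((hasDerivAt_id (0 : ℝ)).smul_const h).const_add v
        simpa [hz] using (this.const_smul s).const_sub (c • u)
      have h2 : HasDerivAt (fun τ : ℝ => f (z (u, v + τ • h)))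
          (fderiv ℝ f (z (u, v)) (-s • h)) 0 := by
        have h3 : HasFDerivAt f (fderiv ℝ f (z (u, v))) (z (u, v + (0 : ℝ) • h)) := by
          simpa using (hfd (z (u, v))).hasFDerivAt
        exact h3.comp_hasDerivAt 0 h1
      have h4 := (h2.sub_const (f u)).exp
      simpa [HasLineDerivAt, hG0] using h4
    have hi' : Integrable (fun v => G0 (u, v) * fderiv ℝ f (z (u, v)) (-s • h)) (stdG ι) := by
      refine (hu0.mul_const (C * ‖-s • h‖)).mono' ?_ (ae_of_all _ fun v => ?_)
      · have hzc : Continuous fun v : ι → ℝ => z (u, v) := by rw [hz]; fun_prop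
        exact ((hG0c.comp (by fun_prop : Continuous fun v : ι → ℝ => (u, v))).mul
          ((hf'c.comp hzc).clm_apply continuous_const)).aestronglyMeasurable
      · rw [norm_mul]
        have : ‖G0 (u, v)‖ = G0 (u, v) := by simp [hG0]
        rw [this]
        gcongr
        exact hC _ _
    have hibp := stdG_integral_by_parts hline hu0 hi' (by
      refine hu.neg.congr (ae_of_all _ fun v => ?_)
      simp only [hG, Pi.neg_apply, hdir]; ring)
    calc ∫ v, G (u, v) ∂stdG ι = -∫ v, (∑ i, h i * v i) * G0 (u, v) ∂stdG ι := by
          rw [← integral_neg]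
          refine integral_congr_ae (ae_of_all _ fun v => ?_)
          simp only [hG, hdir]; ring
      _ = ∫ v, s * (G0 (u, v) * fderiv ℝ f (z (u, v)) h) ∂stdG ι := by
          rw [hibp, ← integral_neg]
          refine integral_congr_ae (ae_of_all _ fun v => ?_)
          simp; ring
      _ ≤ ∫ v, K * s * G0 (u, v) ∂stdG ι := by
          refine integral_mono_ae ?_ (hu0.const_mul _) (ae_of_all _ fun v => ?_)
          · refine hi'.neg.congr (ae_of_all _ fun v => ?_)
            simp; ring
          · have h5 := fderiv_mul_le hK hK0 u (z (u, v))
            have h6 : 0 ≤ s * G0 (u, v) := mul_nonneg hs (Real.exp_pos _).le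
            have h7 := mul_le_mul_of_nonneg_left h5 h6
            simp only
            linarith
      _ = K * s * ∫ v, G0 (u, v) ∂stdG ι := integral_const_mul _ _
  -- Grönwall with the integrating factor `exp (K cos θ)`
  have hanti : AntitoneOn (fun θ => ψ θ * Real.exp (K * Real.cos θ)) (Set.Icc 0 (Real.pi / 2)) := by
    have hd : ∀ θ, HasDerivAt (fun θ => ψ θ * Real.exp (K * Real.cos θ))
        ((∫ p, F' θ p ∂μ) * Real.exp (K * Real.cos θ)
          + ψ θ * (Real.exp (K * Real.cos θ) * (K * -Real.sin θ))) θ := fun θ =>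
      (hψd θ).mul ((Real.hasDerivAt_cos θ).const_mul K).exp
    refine antitoneOn_of_deriv_nonpos (convex_Icc _ _)
      (fun θ _ => (hd θ).continuousAt.continuousWithinAt)
      (fun θ _ => (hd θ).differentiableAt.differentiableWithinAt) fun θ hθ => ?_
    rw [interior_Icc] at hθ
    rw [(hd θ).deriv]
    have h1 := hineq θ (Real.sin_nonneg_of_nonneg_of_le_pi hθ.1.le
      (by linarith [hθ.2, Real.pi_pos]))
    nlinarith [Real.exp_pos (K * Real.cos θ)]
  have hfin := hanti (Set.left_mem_Icc.2 (by positivity)) (Set.right_mem_Icc.2 (by positivity))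
    (by positivity : (0 : ℝ) ≤ Real.pi / 2)
  simpa [hψ, hF, hw] using hfin

/-- A function with `|∇f|² ≤ K` has sub-Gaussian deviations from its Gaussian mean: Jensen's
inequality removes the independent copy in `stdG_exp_sub_le`. -/
theorem stdG_hasSubgaussianMGF {f : (ι → ℝ) → ℝ} (hf : ContDiff ℝ 1 f) {K : NNReal}
    (hK : ∀ x h, (fderiv ℝ f x h) ^ 2 ≤ K * ∑ i, h i ^ 2) :
    HasSubgaussianMGF (fun x => f x - ∫ y, f y ∂stdG ι) (2 * K) (stdG ι) := by
  have hfd : Differentiable ℝ f := hf.differentiable (by norm_num)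
  have hfc : Continuous f := hf.continuous
  set C := √(K * Fintype.card ι) with hCdef
  have hC0 : 0 ≤ C := Real.sqrt_nonneg _
  have hlip := abs_sub_le_of_fderiv hfd hC0 (abs_fderiv_le hK K.2)
  have habs : ∀ x, |f x - f 0| ≤ C * ‖x‖ := by
    intro x
    have h1 := hlip x 0
    have h2 := hlip 0 x
    simp only [sub_zero, zero_sub, norm_neg] at h1 h2
    exact abs_le.2 ⟨by linarith, h1⟩
  have hexp : ∀ t m : ℝ, Integrable (fun x => Real.exp (t * (f x - m))) (stdG ι) := by
    intro t m
    refine ((integrable_exp_norm_stdG (ι := ι) (|t| * C)).const_mul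
      (Real.exp (t * (f 0 - m)))).mono' (by fun_prop) (ae_of_all _ fun x => ?_)
    rw [Real.norm_eq_abs, Real.abs_exp, ← Real.exp_add]
    apply Real.exp_le_exp.2
    have h1 : t * (f x - f 0) ≤ |t| * (C * ‖x‖) := by
      refine (le_abs_self _).trans ?_
      rw [abs_mul]
      gcongr
      exact habs x
    linarith
  have hfi : Integrable f (stdG ι) := by
    have h1 : Integrable (fun x => f x - f 0) (stdG ι) := by
      refine (integrable_exp_norm_stdG (ι := ι) C).mono' (by fun_prop) (ae_of_all _ fun x => ?_)
      exact (habs x).trans (by linarith [Real.add_one_le_exp (C * ‖x‖)])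
    exact (h1.add (integrable_const (f 0))).congr (ae_of_all _ fun x => by simp)
  set m := ∫ y, f y ∂stdG ι with hm
  refine ⟨fun t => hexp t m, fun t => ?_⟩
  have hlin : Integrable (fun y => -t * (f y - m)) (stdG ι) :=
    (hfi.sub (integrable_const m)).const_mul (-t)
  -- Jensen's inequality, from `1 + y ≤ exp y` and the vanishing mean of `f - m`
  have hJ : 1 ≤ ∫ y, Real.exp (-t * (f y - m)) ∂stdG ι := by
    have h1 : ∫ y, (-t * (f y - m) + 1) ∂stdG ι = 1 := by
      rw [integral_add hlin (integrable_const 1),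
        integral_const_mul, integral_sub hfi (integrable_const m)]
      simp [hm]
    rw [← h1]
    exact integral_mono (hlin.add (integrable_const 1))
      (hexp _ m) fun y => Real.add_one_le_exp _
  have hmain := stdG_exp_sub_le (f := fun x => t * f x) (contDiff_const.mul hf)
    (K := t ^ 2 * K) (by positivity) (fun x h => by
      rw [fderiv_const_mul (hfd x)]
      have := mul_le_mul_of_nonneg_left (hK x h) (sq_nonneg t)
      simp only [FunLike.coe_smul, Pi.smul_apply, smul_eq_mul]
      nlinarith)
  have hsplit : ∫ p : (ι → ℝ) × (ι → ℝ), Real.exp (t * f p.1 - t * f p.2)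
        ∂((stdG ι).prod (stdG ι))
      = (∫ x, Real.exp (t * (f x - m)) ∂stdG ι) * ∫ y, Real.exp (-t * (f y - m)) ∂stdG ι := by
    rw [← integral_prod_mul]
    refine integral_congr_ae (ae_of_all _ fun p => ?_)
    simp only [← Real.exp_add]
    ring_nf
  rw [hsplit] at hmain
  have h0 : 0 ≤ ∫ x, Real.exp (t * (f x - m)) ∂stdG ι := integral_nonneg fun _ => (Real.exp_pos _).le
  unfold mgf
  refine le_trans (le_mul_of_one_le_right h0 hJ) (hmain.trans_eq ?_)
  push_cast
  ring_nf

end GaussianPart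

/-! ### The gradient of the log-determinant -/

section DeterminantPart

variable {N : ℕ}

lemma sampleY_add_smul (A : Matrix (Fin N) (Fin N) ℝ) (x h : PairIdx N → ℝ) (τ : ℝ) :
    sampleY A (x + τ • h) = sampleY A x + τ • sampleY A h := by
  ext i j
  simp only [sampleY, Matrix.of_apply, Matrix.add_apply, Matrix.smul_apply, Pi.add_apply,
    Pi.smul_apply, smul_eq_mul]
  split_ifs <;> ring

lemma sampleY_transpose {A : Matrix (Fin N) (Fin N) ℝ} (hA : Aᵀ = -A) (x : PairIdx N → ℝ) :
    (sampleY A x)ᵀ = -sampleY A x := by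
  ext i j
  have h : A j i = -A i j := congrFun (congrFun hA i) j
  simp only [sampleY, Matrix.of_apply, Matrix.transpose_apply, Matrix.neg_apply]
  rcases lt_trichotomy i j with hij | hij | hij
  · simp [hij, hij.not_gt, h]
  · simp [hij]
  · simp [hij, hij.not_gt, h]

lemma det_ne_zero_of_skew {Y : Matrix (Fin N) (Fin N) ℝ} (hY : Yᵀ = -Y) {s : ℝ} (hs : 0 < s) :
    (s • (1 : Matrix (Fin N) (Fin N) ℝ) + Y).det ≠ 0 := by
  intro h0
  obtain ⟨v, hv, hMv⟩ := Matrix.exists_mulVec_eq_zero_iff.2 h0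
  have hYv : v ⬝ᵥ (Y *ᵥ v) = 0 := by
    have h1 : v ⬝ᵥ (Y *ᵥ v) = v ⬝ᵥ (Yᵀ *ᵥ v) := by
      rw [Matrix.mulVec_transpose, dotProduct_comm v (v ᵥ* Y), Matrix.dotProduct_mulVec]
    rw [hY, Matrix.neg_mulVec, dotProduct_neg] at h1
    linarith
  have h2 : s * (v ⬝ᵥ v) = 0 := by
    have := congrArg (v ⬝ᵥ ·) hMv
    simpa [Matrix.add_mulVec, Matrix.smul_mulVec, dotProduct_add, hYv] using this
  rcases mul_eq_zero.1 h2 with h | h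
  · exact hs.ne' h
  · exact hv (dotProduct_self_eq_zero.1 h)

/-- Jacobi's formula at the identity. -/
lemma hasDerivAt_det_one_add_smul (B : Matrix (Fin N) (Fin N) ℝ) :
    HasDerivAt (fun τ : ℝ => (1 + τ • B).det) B.trace 0 := by
  set P := (det (1 + (Polynomial.X : Polynomial ℝ) • B.map Polynomial.C)).divX.divX
  have hfun : (fun τ : ℝ => (1 + τ • B).det) = fun τ => 1 + B.trace * τ + P.eval τ * τ ^ 2 :=
    funext fun τ => Matrix.det_one_add_smul τ B
  rw [hfun]
  have h1 := ((hasDerivAt_id (0 : ℝ)).const_mul B.trace).const_add 1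
  have h2 := (P.hasDerivAt 0).mul ((hasDerivAt_id (0 : ℝ)).pow 2)
  exact (h1.add h2).congr_deriv (by simp)

lemma hasLineDerivAt_log_det {A : Matrix (Fin N) (Fin N) ℝ} (hA : Aᵀ = -A) {s : ℝ} (hs : 0 < s)
    (x h : PairIdx N → ℝ) :
    HasLineDerivAt ℝ (fun ξ => Real.log (s • (1 : Matrix (Fin N) (Fin N) ℝ) + sampleY A ξ).det)
      ((s • (1 : Matrix (Fin N) (Fin N) ℝ) + sampleY A x)⁻¹ * sampleY A h).trace x h := by
  set M := s • (1 : Matrix (Fin N) (Fin N) ℝ) + sampleY A x with hM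
  have hdet : M.det ≠ 0 := det_ne_zero_of_skew (sampleY_transpose hA x) hs
  have hfac : ∀ τ : ℝ, (s • (1 : Matrix (Fin N) (Fin N) ℝ) + sampleY A (x + τ • h)).det
      = M.det * (1 + τ • (M⁻¹ * sampleY A h)).det := by
    intro τ
    rw [← Matrix.det_mul, sampleY_add_smul, Matrix.mul_add, Matrix.mul_one, Matrix.mul_smul,
      Matrix.mul_nonsing_inv_cancel_left _ _ (isUnit_iff_ne_zero.2 hdet), hM, add_assoc]
  unfold HasLineDerivAt
  simp_rw [hfac]
  have h1 := (hasDerivAt_det_one_add_smul (M⁻¹ * sampleY A h)).const_mul M.det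
  have h2 := h1.log (by simpa using hdet)
  simpa [hdet] using h2

lemma contDiff_log_det {A : Matrix (Fin N) (Fin N) ℝ} (hA : Aᵀ = -A) {s : ℝ} (hs : 0 < s) :
    ContDiff ℝ 1
      (fun ξ => Real.log (s • (1 : Matrix (Fin N) (Fin N) ℝ) + sampleY A ξ).det) := by
  refine ContDiff.log ?_ fun ξ => det_ne_zero_of_skew (sampleY_transpose hA ξ) hs
  simp_rw [Matrix.det_apply]
  refine ContDiff.sum fun σ _ => ContDiff.const_smul _ (contDiff_prod fun i _ => ?_)
  simp only [sampleY, Matrix.add_apply, Matrix.of_apply]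
  refine contDiff_const.add ?_
  split_ifs <;> fun_prop

/-- For skew-symmetric `Y`, the resolvent `G = (s + Y)⁻¹` satisfies
`G + Gᵀ = 2s G Gᵀ`, so with `c = 1 / (2s)` the matrix `G - c` is `c` times an orthogonal matrix. -/
lemma resolvent_sphere {Y : Matrix (Fin N) (Fin N) ℝ} (hY : Yᵀ = -Y) {s : ℝ} (hs : 0 < s) :
    ((s • (1 : Matrix (Fin N) (Fin N) ℝ) + Y)⁻¹ - (1 / (2 * s)) • 1) *
      ((s • (1 : Matrix (Fin N) (Fin N) ℝ) + Y)⁻¹ - (1 / (2 * s)) • 1)ᵀ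
      = (1 / (2 * s)) ^ 2 • (1 : Matrix (Fin N) (Fin N) ℝ) := by
  set M := s • (1 : Matrix (Fin N) (Fin N) ℝ) + Y with hM
  have hdet : IsUnit M.det := isUnit_iff_ne_zero.2 (det_ne_zero_of_skew hY hs)
  have hMT : Mᵀ = (2 * s) • (1 : Matrix (Fin N) (Fin N) ℝ) - M := by
    rw [hM, Matrix.transpose_add, hY]
    simp only [Matrix.transpose_smul, Matrix.transpose_one]
    module
  set G := M⁻¹ with hG
  have hGM : G * M = 1 := Matrix.nonsing_inv_mul _ hdet
  have hMG : Mᵀ * Gᵀ = 1 := by rw [← Matrix.transpose_mul, hGM, Matrix.transpose_one]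
  have hsum : (2 * s) • (G * Gᵀ) = G + Gᵀ := by
    have h1 : G * (M + Mᵀ) * Gᵀ = G + Gᵀ := by
      rw [Matrix.mul_add, Matrix.add_mul, hGM, Matrix.mul_assoc, hMG]
      simp [add_comm]
    rw [← h1, hMT]
    simp
  have hs2 : (2 * s) ≠ 0 := by positivity
  have hGG : G * Gᵀ = (1 / (2 * s)) • (G + Gᵀ) := by
    rw [← hsum, smul_smul, one_div_mul_cancel hs2, one_smul]
  rw [Matrix.transpose_sub, Matrix.transpose_smul, Matrix.transpose_one, Matrix.sub_mul,
    Matrix.mul_sub, Matrix.mul_sub, hGG]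
  simp only [Matrix.smul_mul, Matrix.mul_smul, Matrix.one_mul, Matrix.mul_one]
  module

/-- `‖Y_A(h)‖² ≤ 2a² |h|²` in the Frobenius norm: each coordinate of `h` occurs in two entries. -/
lemma sum_sq_sampleY_le {A : Matrix (Fin N) (Fin N) ℝ} {a : ℝ} (ha : ∀ i j, |A i j| ≤ a)
    (h : PairIdx N → ℝ) :
    ∑ i, ∑ j, sampleY A h i j ^ 2 ≤ 2 * a ^ 2 * ∑ p, h p ^ 2 := by
  -- `e` carries the contribution of the strictly upper-triangular entries
  set e : Fin N → Fin N → ℝ := fun i j =>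
    if hij : i < j then a ^ 2 * h ⟨(i, j), hij⟩ ^ 2 else 0 with he
  have hA2 : ∀ i j, A i j ^ 2 ≤ a ^ 2 := fun i j =>
    sq_le_sq' (by linarith [(abs_le.1 (ha i j)).1]) (abs_le.1 (ha i j)).2
  have hle : ∀ i j, sampleY A h i j ^ 2 ≤ e i j + e j i := by
    intro i j
    simp only [sampleY, Matrix.of_apply, he]
    rcases lt_trichotomy i j with hij | hij | hij
    · simp only [hij, hij.not_gt, dif_pos, dif_neg, not_false_iff, mul_pow, add_zero]
      exact mul_le_mul_of_nonneg_right (hA2 i j) (sq_nonneg _)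
    · simp [hij]
    · simp only [hij, hij.not_gt, dif_pos, dif_neg, not_false_iff, mul_pow, zero_add]
      exact mul_le_mul_of_nonneg_right (hA2 i j) (sq_nonneg _)
  have hsum : ∑ i, ∑ j, e i j = a ^ 2 * ∑ p, h p ^ 2 := by
    rw [← Fintype.sum_prod_type', Finset.mul_sum]
    simp only [he]
    rw [Finset.sum_dite, Finset.sum_const_zero, add_zero]
    exact Finset.sum_bij' (fun p _ => ⟨p.1, (Finset.mem_filter.1 p.2).2⟩)
      (fun p _ => ⟨p.1, Finset.mem_filter.2 ⟨Finset.mem_univ _, p.2⟩⟩)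
      (by simp) (by simp) (by simp) (by simp) (by simp)
  calc ∑ i, ∑ j, sampleY A h i j ^ 2 ≤ ∑ i, ∑ j, (e i j + e j i) :=
        Finset.sum_le_sum fun i _ => Finset.sum_le_sum fun j _ => hle i j
    _ = 2 * a ^ 2 * ∑ p, h p ^ 2 := by
        simp only [Finset.sum_add_distrib]
        rw [Finset.sum_comm (f := fun i j => e j i), hsum]
        ring

/-- Cauchy-Schwarz for the Frobenius inner product. -/
lemma sq_trace_mul_le (B H : Matrix (Fin N) (Fin N) ℝ) :
    (B * H).trace ^ 2 ≤ (B * Bᵀ).trace * ∑ i, ∑ j, H i j ^ 2 := by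
  have h1 : (B * H).trace = ∑ p : Fin N × Fin N, B p.1 p.2 * H p.2 p.1 := by
    rw [Fintype.sum_prod_type]; simp [Matrix.trace, Matrix.mul_apply]
  have h2 : (B * Bᵀ).trace = ∑ p : Fin N × Fin N, B p.1 p.2 ^ 2 := by
    rw [Fintype.sum_prod_type]; simp [Matrix.trace, Matrix.mul_apply, sq]
  have h3 : ∑ i, ∑ j, H i j ^ 2 = ∑ p : Fin N × Fin N, H p.2 p.1 ^ 2 := by
    rw [Fintype.sum_prod_type, Finset.sum_comm]
  rw [h1, h2, h3]
  exact Finset.sum_mul_sq_le_sq_mul_sq _ _ _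

/-- The gradient bound `|∇f|² ≤ a² N / (2t)` for `f ξ = log det (√t I + Y_A(ξ))`. -/
lemma sq_fderiv_log_det_le {A : Matrix (Fin N) (Fin N) ℝ} (hA : Aᵀ = -A) {a : ℝ}
    (ha : ∀ i j, |A i j| ≤ a) {t : ℝ} (ht : 0 < t) (x h : PairIdx N → ℝ) :
    (fderiv ℝ (fun ξ => Real.log (√t • (1 : Matrix (Fin N) (Fin N) ℝ) + sampleY A ξ).det) x h) ^ 2
      ≤ (a ^ 2 * N / (2 * t)) * ∑ p, h p ^ 2 := by
  have hs : 0 < √t := Real.sqrt_pos.2 ht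
  have hd := ((contDiff_log_det hA hs).differentiable (by norm_num) x).hasFDerivAt.hasLineDerivAt h
  rw [hd.lineDeriv.symm, (hasLineDerivAt_log_det hA hs x h).lineDeriv]
  have htr : (sampleY A h).trace = 0 := by simp [Matrix.trace, sampleY]
  set G := (√t • (1 : Matrix (Fin N) (Fin N) ℝ) + sampleY A x)⁻¹ with hG
  have h1 : (G * sampleY A h).trace = ((G - (1 / (2 * √t)) • 1) * sampleY A h).trace := by
    simp [Matrix.sub_mul, Matrix.trace_sub, Matrix.trace_smul, htr]
  rw [h1]
  refine (sq_trace_mul_le _ _).trans ?_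
  rw [hG, resolvent_sphere (sampleY_transpose hA x) hs, Matrix.trace_smul, Matrix.trace_one,
    Fintype.card_fin, div_pow, mul_pow, Real.sq_sqrt ht.le, smul_eq_mul]
  refine (mul_le_mul_of_nonneg_left (sum_sq_sampleY_le ha h) (by positivity)).trans_eq ?_
  field_simp

end DeterminantPart

/-! ### Averages of independent copies -/

section Averages

/-- Two-sided Hoeffding bound for the average of `k` independent copies of a random variable whose
deviation from `m` is sub-Gaussian; the copies are realised on the `k`-fold product space. -/
lemma measure_pi_average_sub_ge_le {Ω : Type*} [MeasurableSpace Ω] {μ : Measure Ω}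
    [IsProbabilityMeasure μ] {f : Ω → ℝ} (hfm : Measurable f) {m : ℝ} {c : NNReal}
    (hsub : HasSubgaussianMGF (fun x => f x - m) c μ) {k : ℕ} (hk : 1 ≤ k) {ε : ℝ} (hε : 0 ≤ ε) :
    (Measure.pi fun _ : Fin k => μ) {ξ | ε ≤ |(1 / (k : ℝ)) * ∑ i : Fin k, f (ξ i) - m|}
      ≤ ENNReal.ofReal (2 * Real.exp (-(k * ε ^ 2) / (2 * c))) := by
  have hk0 : (0 : ℝ) < k := by exact_mod_cast hk
  set P := Measure.pi fun _ : Fin k => μ with hP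
  set X : Fin k → (Fin k → Ω) → ℝ := fun i ξ => f (ξ i) - m with hX
  have hXsub : ∀ i, HasSubgaussianMGF (X i) c P := fun i => by
    have hev := measurePreserving_eval (fun _ : Fin k => μ) i
    refine HasSubgaussianMGF.of_map (X := fun x => f x - m)
      (Y := Function.eval i) hev.measurable.aemeasurable ?_
    rw [hev.map_eq]
    exact hsub
  have hXind : iIndepFun X P := iIndepFun_pi (X := fun _ x => f x - m)
    fun _ => (hfm.sub_const _).aemeasurable
  have hYind : iIndepFun (fun i => -X i) P := hXind.comp (fun _ y => -y) fun _ => measurable_neg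
  have hkε : 0 ≤ (k : ℝ) * ε := by positivity
  have h1 := HasSubgaussianMGF.measure_sum_ge_le_of_iIndepFun hXind (s := Finset.univ)
    (fun i _ => hXsub i) hkε
  have h2 := HasSubgaussianMGF.measure_sum_ge_le_of_iIndepFun hYind (s := Finset.univ)
    (fun i _ => (hXsub i).neg) hkε
  have hexp : -((k : ℝ) * ε) ^ 2 / (2 * ((∑ _i : Fin k, c : NNReal) : ℝ))
      = -(k * ε ^ 2) / (2 * c) := by
    rw [Finset.sum_const, Finset.card_univ, Fintype.card_fin, nsmul_eq_mul, NNReal.coe_mul,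
      NNReal.coe_natCast, ← mul_div_mul_left (-(k * ε ^ 2)) (2 * (c : ℝ)) hk0.ne']
    congr 1 <;> ring
  rw [hexp] at h1 h2
  have hincl : {ξ : Fin k → Ω | ε ≤ |(1 / (k : ℝ)) * ∑ i : Fin k, f (ξ i) - m|}
      ⊆ {ξ | k * ε ≤ ∑ i, X i ξ} ∪ {ξ | k * ε ≤ ∑ i, (-X i) ξ} := by
    intro ξ hξ
    have hsum : ∑ i, X i ξ = k * ((1 / (k : ℝ)) * ∑ i : Fin k, f (ξ i) - m) := by
      simp only [hX, Finset.sum_sub_distrib, Finset.sum_const, Finset.card_univ, Fintype.card_fin,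
        nsmul_eq_mul]
      field_simp
    simp only [Set.mem_union, Set.mem_ofPred_eq, Pi.neg_apply, Finset.sum_neg_distrib, hsum,
      ← mul_neg] at hξ ⊢
    exact (le_abs.1 hξ).imp (fun h => mul_le_mul_of_nonneg_left h hk0.le)
      fun h => mul_le_mul_of_nonneg_left h hk0.le
  rw [two_mul, ENNReal.ofReal_add (Real.exp_pos _).le (Real.exp_pos _).le]
  refine (measure_mono hincl).trans ((measure_union_le _ _).trans (add_le_add ?_ ?_))
  · rw [← ofReal_measureReal]
    exact ENNReal.ofReal_le_ofReal h1
  · rw [← ofReal_measureReal]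
    exact ENNReal.ofReal_le_ofReal h2

end Averages

/-- concentration for `k` independent samples:
`Pr(|(1/k) Σ_i log det(√t I + Y_A(ξ_i)) - log Φ̃(t,A)| ≥ Nr) ≤ 2 exp(-tkNr²/(2a²))`. -/
theorem concentration_log_det_k_samples
    {N : ℕ} (A : Matrix (Fin N) (Fin N) ℝ) (hA : Aᵀ = -A) (hA0 : A ≠ 0)
    (a : ℝ) (ha : ∀ i j, |A i j| ≤ a) (ha' : ∃ i j, |A i j| = a)
    (t : ℝ) (ht : 0 < t) (k : ℕ) (hk : 1 ≤ k) (r : ℝ) (hr : 0 < r) :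
    (Measure.pi fun _ : Fin k => gaussPi N) {ξ | (N : ℝ) * r ≤
        |(1 / (k : ℝ)) * ∑ i : Fin k,
            Real.log ((Real.sqrt t • (1 : Matrix (Fin N) (Fin N) ℝ) +
              sampleY A (ξ i)).det) -
          logPhiTilde t A|} ≤
      ENNReal.ofReal (2 * Real.exp (-(t * k * N * r ^ 2) / (2 * a ^ 2))) := by
  obtain ⟨i₀, -, -⟩ := ha'
  have ha0 : 0 < a := by
    by_contra hna
    refine hA0 (Matrix.ext fun i j => ?_)
    exact abs_nonpos_iff.1 ((ha i j).trans (not_lt.1 hna))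
  have hN : (0 : ℝ) < N := by exact_mod_cast i₀.pos
  have hfC := contDiff_log_det hA (Real.sqrt_pos.2 ht)
  have : IsProbabilityMeasure (gaussPi N) := inferInstanceAs (IsProbabilityMeasure (stdG _))
  obtain ⟨K, hK⟩ : ∃ K : NNReal, (K : ℝ) = a ^ 2 * N / (2 * t) :=
    ⟨⟨a ^ 2 * N / (2 * t), by positivity⟩, rfl⟩
  -- `gaussPi N` and `stdG (PairIdx N)` are definitionally the same measure
  have hsub : HasSubgaussianMGF
      (fun ξ => Real.log (√t • (1 : Matrix (Fin N) (Fin N) ℝ) + sampleY A ξ).det - logPhiTilde t A)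
      (2 * K) (gaussPi N) :=
    stdG_hasSubgaussianMGF hfC (hK ▸ sq_fderiv_log_det_le hA ha ht)
  refine (measure_pi_average_sub_ge_le hfC.continuous.measurable hsub hk
    (by positivity)).trans_eq ?_
  rw [NNReal.coe_mul, NNReal.coe_ofNat, hK]
  congr 3
  field_simp
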